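/- arXiv:2302.11145 — 6 statements merged into one kernel-verified Lean document; each statement's English description precedes it below -/
import Mathlib

section
/- Let (A,*,{·,·,·}) be a finite-dimensional pre-Lie-Yamaguti algebra over a field of characteristic 0, and let A^c ⋉_{L*,−R*τ} A* be the semidirect product Lie-Yamaguti algebra of the sub-adjacent Lie-Yamaguti algebra A^c with the dual representation of (A;L,R). Then (A^c ⋉_{L*,−R*τ} A*, ω_p, E) is a perfect para-Kähler Lie-Yamaguti algebra, where ω_p(x+α,y+β) := ⟨α,y⟩−⟨β,x⟩ and E(x+α) := x−α for x,y in A and α,β in A*. -/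
/-!
The brackets of the semidirect product are compatible with the grading `A ⊕ A*` (the `A*`-component
is additive in the dual arguments and `A*` acts trivially on itself), so `E = 1 ⊕ (-1)` is an
automorphism of both brackets and is integrable. Its eigenspaces are `A` and `A*`, of equal
dimension because `A` is finite-dimensional.

For the symplectic identities, the key point is that the operator `D` of the dual representation
is `⟨D(x,y)α, v⟩ = -⟨α, {x,y,v}_D⟩` (`LYD_dual_apply`). After this substitution both cyclic
conditions split into scalar identities, one for each of the covectors involved, each being
the definition of `[·,·]_C` or `⟦·,·,·⟧_C`.
-/


/- Common definitions: Lie-Yamaguti algebras, representations, pre-Lie-Yamaguti algebras,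
   product/complex/symplectic structures, etc. -/

section LYDefs

variable (k : Type*) [Field k]

/-- A bilinear map, given as a plain function. -/
structure IsBilinMap {M N P : Type*} [AddCommGroup M] [Module k M] [AddCommGroup N] [Module k N]
    [AddCommGroup P] [Module k P] (f : M → N → P) : Prop where
  add₁ : ∀ (x y : M) (z : N), f (x + y) z = f x z + f y z
  smul₁ : ∀ (c : k) (x : M) (z : N), f (c • x) z = c • f x z
  add₂ : ∀ (x : M) (y z : N), f x (y + z) = f x y + f x z
  smul₂ : ∀ (c : k) (x : M) (y : N), f x (c • y) = c • f x y

/-- A trilinear map, given as a plain function. -/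
structure IsTrilinMap {M N P Q : Type*} [AddCommGroup M] [Module k M] [AddCommGroup N] [Module k N]
    [AddCommGroup P] [Module k P] [AddCommGroup Q] [Module k Q] (f : M → N → P → Q) : Prop where
  add₁ : ∀ (x y : M) (z : N) (w : P), f (x + y) z w = f x z w + f y z w
  smul₁ : ∀ (c : k) (x : M) (z : N) (w : P), f (c • x) z w = c • f x z w
  add₂ : ∀ (x : M) (y z : N) (w : P), f x (y + z) w = f x y w + f x z w
  smul₂ : ∀ (c : k) (x : M) (y : N) (w : P), f x (c • y) w = c • f x y w
  add₃ : ∀ (x : M) (y : N) (z w : P), f x y (z + w) = f x y z + f x y w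
  smul₃ : ∀ (c : k) (x : M) (y : N) (z : P), f x y (c • z) = c • f x y z

variable {k}

theorem IsBilinMap.right {M N P : Type*} [AddCommGroup M] [Module k M] [AddCommGroup N]
    [Module k N] [AddCommGroup P] [Module k P] {f : M → N → P} (h : IsBilinMap k f) (x : M) :
    IsLinearMap k (f x) :=
  ⟨h.add₂ x, fun c y => h.smul₂ c x y⟩

theorem IsTrilinMap.first {M N P Q : Type*} [AddCommGroup M] [Module k M] [AddCommGroup N]
    [Module k N] [AddCommGroup P] [Module k P] [AddCommGroup Q] [Module k Q]
    {f : M → N → P → Q} (h : IsTrilinMap k f) (y : N) (z : P) :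
    IsLinearMap k (fun x => f x y z) :=
  ⟨fun a b => h.add₁ a b y z, fun c a => h.smul₁ c a y z⟩

theorem IsTrilinMap.third {M N P Q : Type*} [AddCommGroup M] [Module k M] [AddCommGroup N]
    [Module k N] [AddCommGroup P] [Module k P] [AddCommGroup Q] [Module k Q]
    {f : M → N → P → Q} (h : IsTrilinMap k f) (x : M) (y : N) :
    IsLinearMap k (f x y) :=
  ⟨h.add₃ x y, fun c z => h.smul₃ c x y z⟩

variable (k)

/-- A Lie-Yamaguti algebra structure, given by a binary bracket `b` and a ternary bracket `t`. -/
structure IsLieYamaguti {g : Type*} [AddCommGroup g] [Module k g]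
    (b : g → g → g) (t : g → g → g → g) : Prop where
  bilin : IsBilinMap k b
  trilin : IsTrilinMap k t
  skew_b : ∀ x y, b x y = -b y x
  skew_t : ∀ x y z, t x y z = -t y x z
  ly1 : ∀ x y z, b (b x y) z + b (b y z) x + b (b z x) y + t x y z + t y z x + t z x y = 0
  ly2 : ∀ x y z w, t (b x y) z w + t (b y z) x w + t (b z x) y w = 0
  ly3 : ∀ x y z w, t x y (b z w) = b (t x y z) w + b z (t x y w)
  ly4 : ∀ x y z w u, t x y (t z w u) = t (t x y z) w u + t z (t x y w) u + t z w (t x y u)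

variable {k}

/-- The operator `D(x,y) = μ(y,x) - μ(x,y) + ρ(x)ρ(y) - ρ(y)ρ(x) - ρ([x,y])` of a
representation `(ρ, μ)`. -/
def LYD {g V : Type*} [AddCommGroup V] (b : g → g → g) (ρ : g → V → V) (μ : g → g → V → V)
    (x y : g) (v : V) : V :=
  μ y x v - μ x y v + ρ x (ρ y v) - ρ y (ρ x v) - ρ (b x y) v

variable (k)

/-- A representation `(ρ, μ)` of a Lie-Yamaguti algebra `(g, b, t)` on `V`. -/
structure IsLYRep {g V : Type*} [AddCommGroup g] [Module k g] [AddCommGroup V] [Module k V]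
    (b : g → g → g) (t : g → g → g → g) (ρ : g → V → V) (μ : g → g → V → V) : Prop where
  lin : IsBilinMap k ρ
  bilin : IsTrilinMap k μ
  r1 : ∀ x y z v, μ (b x y) z v - μ x z (ρ y v) + μ y z (ρ x v) = 0
  r2 : ∀ x y z v, μ x (b y z) v - ρ y (μ x z v) + ρ z (μ x y v) = 0
  r3 : ∀ x y z v, ρ (t x y z) v = LYD b ρ μ x y (ρ z v) - ρ z (LYD b ρ μ x y v)
  r4 : ∀ x y z w v,
    μ z w (μ x y v) - μ y w (μ x z v) - μ x (t y z w) v + LYD b ρ μ y z (μ x w v) = 0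
  r5 : ∀ x y z w v, μ (t x y z) w v + μ z (t x y w) v
    = LYD b ρ μ x y (μ z w v) - μ z w (LYD b ρ μ x y v)

variable {k}

/-- The binary bracket of the semidirect product Lie-Yamaguti algebra `g ⋉ V`. -/
def sdB {g V : Type*} [AddCommGroup V] (b : g → g → g) (ρ : g → V → V)
    (p q : g × V) : g × V :=
  (b p.1 q.1, ρ p.1 q.2 - ρ q.1 p.2)

/-- The ternary bracket of the semidirect product Lie-Yamaguti algebra `g ⋉ V`. -/
def sdT {g V : Type*} [AddCommGroup V] (b : g → g → g) (t : g → g → g → g)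
    (ρ : g → V → V) (μ : g → g → V → V) (p q r : g × V) : g × V :=
  (t p.1 q.1 r.1, LYD b ρ μ p.1 q.1 r.2 + μ q.1 r.1 p.2 - μ p.1 r.1 q.2)

/-- The associator of a bilinear product. -/
def preAssoc {A : Type*} [AddCommGroup A] (m : A → A → A) (x y z : A) : A :=
  m (m x y) z - m x (m y z)

/-- The bracket `{x,y,z}_D = {z,y,x} - {z,x,y} + (y,x,z) - (x,y,z)` of a
pre-Lie-Yamaguti algebra. -/
def preD {A : Type*} [AddCommGroup A] (m : A → A → A) (t : A → A → A → A) (x y z : A) : A :=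
  t z y x - t z x y + preAssoc m y x z - preAssoc m x y z

variable (k)

/-- A pre-Lie-Yamaguti algebra structure `(*, {·,·,·})` on `A`. -/
structure IsPreLieYamaguti {A : Type*} [AddCommGroup A] [Module k A]
    (m : A → A → A) (t : A → A → A → A) : Prop where
  bilin : IsBilinMap k m
  trilin : IsTrilinMap k t
  p1 : ∀ x y z w, t z (m x y - m y x) w - t (m y z) x w + t (m x z) y w = 0
  p2 : ∀ x y z w, t x y (m z w - m w z) = m z (t x y w) - m w (t x y z)
  p3 : ∀ x y z w u, t (t x y z) w u - t (t x y w) z u - t x y (preD m t z w u)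
        - t x y (t z w u) + t x y (t w z u) + preD m t z w (t x y u) = 0
  p4 : ∀ x y z w u, t z (preD m t x y w) u + t z (t x y w) u - t z (t y x w) u
        + t z w (preD m t x y u) + t z w (t x y u) - t z w (t y x u)
        = preD m t x y (t z w u) - t (preD m t x y z) w u
  p5 : ∀ x y z w, m (preD m t x y z) w + m (t x y z) w - m (t y x z) w
        = preD m t x y (m z w) - m z (preD m t x y w)

variable {k}

/-- The binary bracket `[x,y]_C = x*y - y*x` of the sub-adjacent Lie-Yamaguti algebra. -/
def subAdjB {A : Type*} [AddCommGroup A] (m : A → A → A) (x y : A) : A := m x y - m y x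

/-- The ternary bracket `⟦x,y,z⟧_C = {x,y,z}_D + {x,y,z} - {y,x,z}` of the sub-adjacent
Lie-Yamaguti algebra. -/
def subAdjT {A : Type*} [AddCommGroup A] (m : A → A → A) (t : A → A → A → A) (x y z : A) : A :=
  preD m t x y z + t x y z - t y x z

/-- A relative Rota-Baxter operator `T : V → g` on a Lie-Yamaguti algebra with respect to a
representation `(ρ, μ)`. -/
def IsRelRotaBaxter {g V : Type*} [AddCommGroup g] [AddCommGroup V]
    (b : g → g → g) (t : g → g → g → g) (ρ : g → V → V) (μ : g → g → V → V) (T : V → g) : Prop :=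
  (∀ u v, b (T u) (T v) = T (ρ (T u) v - ρ (T v) u)) ∧
  (∀ u v w, t (T u) (T v) (T w)
    = T (LYD b ρ μ (T u) (T v) w + μ (T v) (T w) u - μ (T u) (T w) v))

/-- The map `L*` of the dual representation of the representation `(L, R)` of the sub-adjacent
Lie-Yamaguti algebra of a pre-Lie-Yamaguti algebra:  `⟨L*(x)α, v⟩ = -⟨α, x*v⟩`. -/
def dualRho {g : Type*} [AddCommGroup g] [Module k g] {m : g → g → g}
    (h : IsBilinMap k m) (x : g) (α : Module.Dual k g) : Module.Dual k g :=
  -(α.comp (IsLinearMap.mk' (m x) (h.right x)))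

/-- The map `-R*τ` of the dual representation of the representation `(L, R)` of the sub-adjacent
Lie-Yamaguti algebra of a pre-Lie-Yamaguti algebra:  `⟨(-R*τ)(x,y)α, v⟩ = ⟨α, {v,y,x}⟩`. -/
def dualMu {g : Type*} [AddCommGroup g] [Module k g] {t : g → g → g → g}
    (h : IsTrilinMap k t) (x y : g) (α : Module.Dual k g) : Module.Dual k g :=
  α.comp (IsLinearMap.mk' (fun v => t v y x) (h.first y x))

/-- The isomorphism `B^♯ : g → g*`, `⟨B^♯(x), y⟩ = B(x,y)`, induced by a bilinear form `B`. -/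
def bsharp {g : Type*} [AddCommGroup g] [Module k g] {B : g → g → k}
    (hB : IsBilinMap k B) (x : g) : Module.Dual k g :=
  IsLinearMap.mk' (B x) (hB.right x)

variable (k)

/-- A product structure on a Lie-Yamaguti algebra: a linear involution `E ≠ ± id` satisfying
the integrability conditions. -/
structure IsProductStructure {g : Type*} [AddCommGroup g] [Module k g]
    (b : g → g → g) (t : g → g → g → g) (E : g → g) : Prop where
  lin : IsLinearMap k E
  invol : ∀ x, E (E x) = x
  ne_id : E ≠ id
  ne_neg_id : E ≠ fun x => -x
  integ_b : ∀ x y, b (E x) (E y) = E (b (E x) y) + E (b x (E y)) - b x y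
  integ_t : ∀ x y z, t (E x) (E y) (E z) =
      E (t (E x) (E y) z) + E (t x (E y) (E z)) + E (t (E x) y (E z))
      - t (E x) y z - t x (E y) z - t x y (E z) + E (t x y z)

variable {k}

/-- The eigenspace of a linear map `E` for the eigenvalue `c`. -/
def eigenspaceOf {g : Type*} [AddCommGroup g] [Module k g] {E : g → g}
    (hE : IsLinearMap k E) (c : k) : Submodule k g :=
  LinearMap.ker (IsLinearMap.mk' E hE - c • LinearMap.id)

variable (k)

/-- A paracomplex structure: a product structure whose `±1`-eigenspaces have the same
dimension. -/
structure IsParacomplex {g : Type*} [AddCommGroup g] [Module k g]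
    (b : g → g → g) (t : g → g → g → g) (E : g → g) : Prop where
  prod : IsProductStructure k b t E
  dim_eq : Module.finrank k (eigenspaceOf prod.lin 1)
    = Module.finrank k (eigenspaceOf prod.lin (-1))

variable {k}

/-- `E` is perfect: it commutes with both brackets. -/
def IsPerfectMap {g : Type*} (b : g → g → g) (t : g → g → g → g) (E : g → g) : Prop :=
  (∀ x y, E (b x y) = b (E x) (E y)) ∧ (∀ x y z, E (t x y z) = t (E x) (E y) (E z))

variable (k)

/-- A complex structure on a (real) Lie-Yamaguti algebra. -/
structure IsComplexStructure {g : Type*} [AddCommGroup g] [Module k g]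
    (b : g → g → g) (t : g → g → g → g) (J : g → g) : Prop where
  lin : IsLinearMap k J
  invol : ∀ x, J (J x) = -x
  integ_b : ∀ x y, b (J x) (J y) = J (b (J x) y) + J (b x (J y)) + b x y
  integ_t : ∀ x y z, J (t x y z) =
      -t (J x) (J y) (J z) + t (J x) y z + t x (J y) z + t x y (J z)
      + J (t (J x) (J y) z) + J (t (J x) y (J z)) + J (t x (J y) (J z))

/-- A complex product structure `(J, E)`: a complex structure `J` and a product structure `E`
which anticommute. -/
def IsComplexProductStructure {g : Type*} [AddCommGroup g] [Module k g]
    (b : g → g → g) (t : g → g → g → g) (J E : g → g) : Prop :=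
  IsComplexStructure k b t J ∧ IsProductStructure k b t E ∧ ∀ x, E (J x) = -J (E x)

/-- A perfect complex product structure. -/
def IsPerfectComplexProductStructure {g : Type*} [AddCommGroup g] [Module k g]
    (b : g → g → g) (t : g → g → g → g) (J E : g → g) : Prop :=
  IsComplexProductStructure k b t J E ∧ IsPerfectMap b t E

/-- A symplectic structure on a Lie-Yamaguti algebra. -/
structure IsSymplectic {g : Type*} [AddCommGroup g] [Module k g]
    (b : g → g → g) (t : g → g → g → g) (ω : g → g → k) : Prop where
  bilin : IsBilinMap k ω
  skew : ∀ x y, ω x y = -ω y x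
  nondeg : ∀ x, (∀ y, ω x y = 0) → x = 0
  c1 : ∀ x y z, ω x (b y z) + ω y (b z x) + ω z (b x y) = 0
  c2 : ∀ x y z w, ω z (t x y w) - ω x (t w z y) + ω y (t w z x) - ω w (t x y z) = 0

/-- A para-Kähler structure `(ω, E)` on a Lie-Yamaguti algebra. -/
def IsParaKahler {g : Type*} [AddCommGroup g] [Module k g]
    (b : g → g → g) (t : g → g → g → g) (ω : g → g → k) (E : g → g) : Prop :=
  IsSymplectic k b t ω ∧ IsParacomplex k b t E ∧ ∀ x y, ω (E x) (E y) = -ω x y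

/-- A pseudo-Kähler structure `(ω, J)` on a (real) Lie-Yamaguti algebra. -/
def IsPseudoKahler {g : Type*} [AddCommGroup g] [Module k g]
    (b : g → g → g) (t : g → g → g → g) (ω : g → g → k) (J : g → g) : Prop :=
  IsSymplectic k b t ω ∧ IsComplexStructure k b t J ∧ ∀ x y, ω (J x) (J y) = ω x y

variable {k}

/-- `E` is abelian: the two brackets vanish on each eigenspace of `E` (equational
characterization). -/
def IsAbelianProduct {g : Type*} [AddCommGroup g] (b : g → g → g) (t : g → g → g → g)
    (E : g → g) : Prop :=
  (∀ x y, b (E x) y = -b x (E y)) ∧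
  (∀ x y z, t (E x) y z + t x (E y) z + t x y (E z) + t (E x) (E y) (E z) = 0)

end LYDefs

section ParaKahler

variable {k A : Type*} [Field k] [AddCommGroup A] [Module k A]

theorem dualRho_apply {m : A → A → A} (h : IsBilinMap k m) (x : A) (α : Module.Dual k A) (v : A) :
    dualRho h x α v = -α (m x v) := rfl

theorem dualMu_apply {t : A → A → A → A} (h : IsTrilinMap k t) (x y : A) (α : Module.Dual k A)
    (v : A) : dualMu h x y α v = α (t v y x) := rfl

/-- The operator `D` of the dual representation is minus the transpose of `{x,y,·}_D`. -/
theorem LYD_dual_apply {m : A → A → A} {t : A → A → A → A} (hm : IsBilinMap k m)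
    (ht : IsTrilinMap k t) (x y : A) (α : Module.Dual k A) (v : A) :
    LYD (subAdjB m) (dualRho hm) (dualMu ht) x y α v = -α (preD m t x y v) := by
  have hsub : m (m x y - m y x) v = m (m x y) v - m (m y x) v := by
    rw [sub_eq_add_neg, hm.add₁, ← neg_one_smul k (m y x), hm.smul₁, neg_one_smul,
      ← sub_eq_add_neg]
  simp only [LYD, subAdjB, preD, preAssoc, LinearMap.sub_apply, LinearMap.add_apply,
    dualRho_apply, dualMu_apply, hsub, map_sub, map_add]
  ring

theorem isSymplectic_semidirect {m : A → A → A} {t : A → A → A → A} (hm : IsBilinMap k m)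
    (ht : IsTrilinMap k t) :
    IsSymplectic k (sdB (subAdjB m) (dualRho hm))
      (sdT (subAdjB m) (subAdjT m t) (dualRho hm) (dualMu ht))
      (fun p q : A × Module.Dual k A => p.2 q.1 - q.2 p.1) where
  bilin := by
    constructor <;> intros <;> simp <;> ring
  skew := by intros; ring
  nondeg := by
    rintro ⟨x, α⟩ hx
    have h1 : α = 0 := by
      ext v
      simpa using hx (v, 0)
    have h2 : x = 0 := by
      refine (Module.forall_dual_apply_eq_zero_iff k x).mp fun φ => ?_
      simpa using hx (0, φ)
    simp [h1, h2]
  c1 := by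
    rintro ⟨x, α⟩ ⟨y, β⟩ ⟨z, γ⟩
    simp only [sdB, subAdjB, LinearMap.sub_apply, dualRho_apply, map_sub]
    ring
  c2 := by
    rintro ⟨x, α⟩ ⟨y, β⟩ ⟨z, γ⟩ ⟨w, δ⟩
    simp only [sdT, subAdjT, LinearMap.sub_apply, LinearMap.add_apply, LYD_dual_apply,
      dualMu_apply, map_sub, map_add]
    ring

/-- The `+1`-eigenspace of `E = 1 ⊕ (-1)` is `A` and its `-1`-eigenspace is `A*`. -/
theorem finrank_eigenspace_semidirect [CharZero k] [FiniteDimensional k A]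
    (hE : IsLinearMap k (fun p : A × Module.Dual k A => (p.1, -p.2))) :
    Module.finrank k (eigenspaceOf hE 1) = Module.finrank k (eigenspaceOf hE (-1)) := by
  have h1 : eigenspaceOf hE 1 = LinearMap.range (LinearMap.inl k A (Module.Dual k A)) := by
    ext ⟨x, α⟩
    have : -α - α = 0 ↔ α = 0 := by
      rw [← neg_add', neg_eq_zero, ← two_smul k α]
      simp
    simpa [eigenspaceOf, Prod.ext_iff, this] using eq_comm
  have h2 : eigenspaceOf hE (-1) = LinearMap.range (LinearMap.inr k A (Module.Dual k A)) := by
    ext ⟨x, α⟩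
    have : x + x = 0 ↔ x = 0 := by
      rw [← two_smul k x]
      simp
    simpa [eigenspaceOf, Prod.ext_iff, this] using eq_comm
  rw [h1, h2, LinearMap.finrank_range_of_inj LinearMap.inl_injective,
    LinearMap.finrank_range_of_inj LinearMap.inr_injective, Subspace.dual_finrank_eq]

theorem isProductStructure_semidirect [CharZero k] [Nontrivial A] {m : A → A → A}
    {t : A → A → A → A} (hm : IsBilinMap k m) (ht : IsTrilinMap k t) :
    IsProductStructure k (sdB (subAdjB m) (dualRho hm))
      (sdT (subAdjB m) (subAdjT m t) (dualRho hm) (dualMu ht))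
      (fun p : A × Module.Dual k A => (p.1, -p.2)) where
  lin := by
    constructor
    · intro x y
      simp [add_comm]
    · intro c x
      simp
  invol := by simp
  ne_id := by
    intro hE
    obtain ⟨φ, hφ⟩ := exists_ne (0 : Module.Dual k A)
    have := congrArg Prod.snd (congrFun hE (0, φ))
    have h1 : -φ = φ := this
    have h2 : (2 : k) • φ = 0 := by rw [two_smul]; nth_rewrite 1 [← h1]; simp
    exact hφ (by simpa using h2)
  ne_neg_id := by
    intro hE
    obtain ⟨x, hx⟩ := exists_ne (0 : A)
    have h1 : x = -x := congrArg Prod.fst (congrFun hE (x, 0))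
    have h2 : (2 : k) • x = 0 := by rw [two_smul]; nth_rewrite 1 [h1]; simp
    exact hx (by simpa using h2)
  integ_b := by
    rintro ⟨x, α⟩ ⟨y, β⟩
    refine Prod.ext ?_ ?_
    · simp [sdB]
    · ext v
      simp [sdB, dualRho_apply]
      ring
  integ_t := by
    rintro ⟨x, α⟩ ⟨y, β⟩ ⟨z, γ⟩
    refine Prod.ext ?_ ?_
    · simp [sdT]
    · ext v
      simp [sdT, LYD_dual_apply, dualMu_apply]
      ring

theorem isPerfectMap_semidirect {m : A → A → A} {t : A → A → A → A} (hm : IsBilinMap k m)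
    (ht : IsTrilinMap k t) :
    IsPerfectMap (sdB (subAdjB m) (dualRho hm))
      (sdT (subAdjB m) (subAdjT m t) (dualRho hm) (dualMu ht))
      (fun p : A × Module.Dual k A => (p.1, -p.2)) := by
  constructor
  · rintro ⟨x, α⟩ ⟨y, β⟩
    refine Prod.ext rfl ?_
    ext v
    simp [sdB, dualRho_apply]
    ring
  · rintro ⟨x, α⟩ ⟨y, β⟩ ⟨z, γ⟩
    refine Prod.ext rfl ?_
    ext v
    simp [sdT, LYD_dual_apply, dualMu_apply]
    ring

end ParaKahler

/-- For a finite-dimensional pre-Lie-Yamaguti algebra `A`, the semidirect product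
`A^c ⋉_{L*, -R*τ} A*` together with `ω_p(x+α, y+β) = ⟨α,y⟩ - ⟨β,x⟩` and `E(x+α) = x - α` is a
perfect para-Kähler Lie-Yamaguti algebra. -/
theorem statement11 {k A : Type*} [Field k] [CharZero k] [AddCommGroup A] [Module k A]
    [FiniteDimensional k A] [Nontrivial A]
    (m : A → A → A) (t : A → A → A → A) (h : IsPreLieYamaguti k m t) :
    IsParaKahler k
      (sdB (subAdjB m) (dualRho h.bilin))
      (sdT (subAdjB m) (subAdjT m t) (dualRho h.bilin) (dualMu h.trilin))
      (fun p q : A × Module.Dual k A => p.2 q.1 - q.2 p.1)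
      (fun p : A × Module.Dual k A => (p.1, -p.2)) ∧
    IsPerfectMap
      (sdB (subAdjB m) (dualRho h.bilin))
      (sdT (subAdjB m) (subAdjT m t) (dualRho h.bilin) (dualMu h.trilin))
      (fun p : A × Module.Dual k A => (p.1, -p.2)) := by
  refine ⟨⟨isSymplectic_semidirect h.bilin h.trilin,
    ⟨isProductStructure_semidirect h.bilin h.trilin, finrank_eigenspace_semidirect _⟩, ?_⟩,
    isPerfectMap_semidirect h.bilin h.trilin⟩
  rintro ⟨x, α⟩ ⟨y, β⟩
  simp only [LinearMap.neg_apply]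
  ring
end

section
/- Let h be a finite-dimensional Lie-Yamaguti algebra over a field of characteristic 0 and let (h ⊕ h*, [·,·], ⟦·,·,·⟧, ω_p) be a phase space of h. Then the linear map E: h ⊕ h* → h ⊕ h* given by E(x+α) = x−α (x in h, α in h*) is a paracomplex structure on h ⊕ h*, and (h ⊕ h*, ω_p, E) is a para-Kähler Lie-Yamaguti algebra. -/
section PhaseSpace

variable {k H : Type*} [Field k] [AddCommGroup H] [Module k H]

theorem IsBilinMap.neg₁ {M N P : Type*} [AddCommGroup M] [Module k M] [AddCommGroup N]
    [Module k N] [AddCommGroup P] [Module k P] {f : M → N → P} (h : IsBilinMap k f)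
    (x : M) (y : N) : f (-x) y = -f x y := by
  simpa using h.smul₁ (-1) x y

theorem IsBilinMap.neg₂ {M N P : Type*} [AddCommGroup M] [Module k M] [AddCommGroup N]
    [Module k N] [AddCommGroup P] [Module k P] {f : M → N → P} (h : IsBilinMap k f)
    (x : M) (y : N) : f x (-y) = -f x y := by
  simpa using h.smul₂ (-1) x y

theorem IsTrilinMap.neg₁ {M N P Q : Type*} [AddCommGroup M] [Module k M] [AddCommGroup N]
    [Module k N] [AddCommGroup P] [Module k P] [AddCommGroup Q] [Module k Q]
    {f : M → N → P → Q} (h : IsTrilinMap k f) (x : M) (y : N) (z : P) :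
    f (-x) y z = -f x y z := by
  simpa using h.smul₁ (-1) x y z

theorem IsTrilinMap.neg₂ {M N P Q : Type*} [AddCommGroup M] [Module k M] [AddCommGroup N]
    [Module k N] [AddCommGroup P] [Module k P] [AddCommGroup Q] [Module k Q]
    {f : M → N → P → Q} (h : IsTrilinMap k f) (x : M) (y : N) (z : P) :
    f x (-y) z = -f x y z := by
  simpa using h.smul₂ (-1) x y z

theorem IsTrilinMap.neg₃ {M N P Q : Type*} [AddCommGroup M] [Module k M] [AddCommGroup N]
    [Module k N] [AddCommGroup P] [Module k P] [AddCommGroup Q] [Module k Q]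
    {f : M → N → P → Q} (h : IsTrilinMap k f) (x : M) (y : N) (z : P) :
    f x y (-z) = -f x y z := by
  simpa using h.smul₃ (-1) x y z

theorem phaseE_isLinearMap :
    IsLinearMap k (fun p : H × Module.Dual k H => (p.1, -p.2)) where
  map_add p q := by ext <;> simp [add_comm]
  map_smul c p := by ext <;> simp

/-- The `1`-eigenspace of `x + α ↦ x - α` is `h`. Characteristic different from `2` is what
excludes nonzero fixed vectors in `h*`. -/
theorem phaseE_eigenspace_one [CharZero k] :
    eigenspaceOf (phaseE_isLinearMap (k := k) (H := H)) 1
      = LinearMap.range (LinearMap.inl k H (Module.Dual k H)) := by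
  ext ⟨x, α⟩
  have hα : -α = α ↔ 0 = α := by
    rw [neg_eq_iff_add_eq_zero, ← two_smul k α, smul_eq_zero, eq_comm (a := 0)]
    simp
  simp [eigenspaceOf, sub_eq_zero, hα]

/-- The `-1`-eigenspace of `x + α ↦ x - α` is `h*`, again because `2` is invertible. -/
theorem phaseE_eigenspace_neg_one [CharZero k] :
    eigenspaceOf (phaseE_isLinearMap (k := k) (H := H)) (-1)
      = LinearMap.range (LinearMap.inr k H (Module.Dual k H)) := by
  ext ⟨x, α⟩
  have hx : x + x = 0 ↔ 0 = x := by
    rw [← two_smul k x, smul_eq_zero, eq_comm (a := 0)]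
    simp
  simp [eigenspaceOf, hx]

/-- If `h` and `h*` are closed under a bilinear bracket on `h ⊕ h*`, the binary integrability
condition holds. -/
theorem phaseE_integ_b {b : H × Module.Dual k H → H × Module.Dual k H → H × Module.Dual k H}
    (hb : IsBilinMap k b) (h₁ : ∀ x y : H, (b (x, 0) (y, 0)).2 = 0)
    (h₂ : ∀ α β : Module.Dual k H, (b (0, α) (0, β)).1 = 0) (p q : H × Module.Dual k H) :
    b (p.1, -p.2) (q.1, -q.2) =
      ((b (p.1, -p.2) q).1, -(b (p.1, -p.2) q).2) + ((b p (q.1, -q.2)).1, -(b p (q.1, -q.2)).2)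
        - b p q := by
  obtain ⟨x, α⟩ := p
  obtain ⟨y, β⟩ := q
  have split : ∀ (u : H) (γ : Module.Dual k H), (u, γ) = (u, 0) + (0, γ) := by simp
  have split' : ∀ (u : H) (γ : Module.Dual k H), (u, -γ) = (u, 0) + -(0, γ) := by simp
  dsimp only
  rw [split' x, split' y, split x α, split y β]
  simp only [hb.add₁, hb.add₂, hb.neg₁, hb.neg₂]
  ext1
  · simp only [Prod.fst_add, Prod.fst_sub, Prod.fst_neg, h₂]
    abel
  · simp only [Prod.snd_add, Prod.snd_sub, Prod.snd_neg, h₁]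
    abel

/-- If `h` and `h*` are closed under a trilinear bracket on `h ⊕ h*`, the ternary integrability
condition holds. -/
theorem phaseE_integ_t
    {t : H × Module.Dual k H → H × Module.Dual k H → H × Module.Dual k H → H × Module.Dual k H}
    (ht : IsTrilinMap k t) (h₁ : ∀ x y z : H, (t (x, 0) (y, 0) (z, 0)).2 = 0)
    (h₂ : ∀ α β γ : Module.Dual k H, (t (0, α) (0, β) (0, γ)).1 = 0)
    {E : H × Module.Dual k H → H × Module.Dual k H} (hE : ∀ p, E p = (p.1, -p.2))
    (p q r : H × Module.Dual k H) :
    t (E p) (E q) (E r) =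
      E (t (E p) (E q) r) + E (t p (E q) (E r)) + E (t (E p) q (E r))
      - t (E p) q r - t p (E q) r - t p q (E r) + E (t p q r) := by
  obtain ⟨x, α⟩ := p
  obtain ⟨y, β⟩ := q
  obtain ⟨z, γ⟩ := r
  have split : ∀ (u : H) (γ : Module.Dual k H), (u, γ) = (u, 0) + (0, γ) := by simp
  have split' : ∀ (u : H) (γ : Module.Dual k H), E (u, γ) = (u, 0) + -(0, γ) := by simp [hE]
  rw [split' x, split' y, split' z, split x α, split y β, split z γ]
  simp only [ht.add₁, ht.add₂, ht.add₃, ht.neg₁, ht.neg₂, ht.neg₃, hE]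
  ext1
  · simp only [Prod.fst_add, Prod.fst_sub, Prod.fst_neg, h₂]
    abel
  · simp only [Prod.snd_add, Prod.snd_sub, Prod.snd_neg, h₁]
    abel

end PhaseSpace

/-- For a phase space `(h ⊕ h*, ω_p)` of a finite-dimensional Lie-Yamaguti
algebra `h`, the map `E(x + α) = x - α` is a paracomplex structure making
`(h ⊕ h*, ω_p, E)` a para-Kähler Lie-Yamaguti algebra. -/
theorem statement12 {k H : Type*} [Field k] [CharZero k] [AddCommGroup H] [Module k H]
    [FiniteDimensional k H] [Nontrivial H]
    (bh : H → H → H) (th : H → H → H → H) (hH : IsLieYamaguti k bh th)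
    (b : H × Module.Dual k H → H × Module.Dual k H → H × Module.Dual k H)
    (t : H × Module.Dual k H → H × Module.Dual k H → H × Module.Dual k H →
      H × Module.Dual k H)
    (hLY : IsLieYamaguti k b t)
    (hsymp : IsSymplectic k b t
      (fun p q : H × Module.Dual k H => p.2 q.1 - q.2 p.1))
    (hsub1 : ∀ x y : H, b (x, 0) (y, 0) = (bh x y, 0))
    (hsub2 : ∀ x y z : H, t (x, 0) (y, 0) (z, 0) = (th x y z, 0))
    (hsub3 : ∀ α β : Module.Dual k H, (b (0, α) (0, β)).1 = 0)
    (hsub4 : ∀ α β γ : Module.Dual k H, (t (0, α) (0, β) (0, γ)).1 = 0) :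
    IsParacomplex k b t (fun p : H × Module.Dual k H => (p.1, -p.2)) ∧
    IsParaKahler k b t (fun p q : H × Module.Dual k H => p.2 q.1 - q.2 p.1)
      (fun p : H × Module.Dual k H => (p.1, -p.2)) := by
  have hpc : IsParacomplex k b t (fun p : H × Module.Dual k H => (p.1, -p.2)) := by
    refine ⟨⟨phaseE_isLinearMap, fun p => by simp, fun h => ?_, fun h => ?_,
      phaseE_integ_b hLY.bilin (fun x y => by rw [hsub1]) hsub3,
      phaseE_integ_t hLY.trilin (fun x y z => by rw [hsub2]) hsub4 fun _ => rfl⟩, ?_⟩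
    · obtain ⟨α, hα⟩ := exists_ne (0 : Module.Dual k H)
      have h1 := congrArg Prod.snd (congrFun h (0, α))
      have h2 : -α = α := h1
      rw [neg_eq_iff_add_eq_zero, ← two_smul k α, smul_eq_zero] at h2
      exact h2.elim two_ne_zero hα
    · obtain ⟨x, hx⟩ := exists_ne (0 : H)
      have h1 := congrArg Prod.fst (congrFun h (x, 0))
      have h2 : x = -x := h1
      rw [eq_neg_iff_add_eq_zero, ← two_smul k x, smul_eq_zero] at h2
      exact h2.elim two_ne_zero hx
    · rw [phaseE_eigenspace_one, phaseE_eigenspace_neg_one,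
        LinearMap.finrank_range_of_inj LinearMap.inl_injective,
        LinearMap.finrank_range_of_inj LinearMap.inr_injective, Subspace.dual_finrank_eq]
  refine ⟨hpc, hsymp, hpc, fun p q => ?_⟩
  simp only [LinearMap.neg_apply]
  ring
end

section
/- Let (g,ω,E) be a finite-dimensional para-Kähler Lie-Yamaguti algebra over a field of characteristic 0 whose paracomplex structure E is abelian and perfect, and let (*, {·,·,·}) be the pre-Lie-Yamaguti structure on g defined by ω. Then for all x,y,z in g: E(x*y) = (Ex)*y and E{x,y,z} = −{Ex,y,z} + {x,Ey,z} + {x,y,Ez}. -/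
/-- In a para-Kähler Lie-Yamaguti algebra whose paracomplex structure `E` is
abelian and perfect, the pre-Lie-Yamaguti structure defined by `ω` satisfies
`E(x*y) = (Ex)*y` and `E{x,y,z} = -{Ex,y,z} + {x,Ey,z} + {x,y,Ez}`. -/
theorem statement13 {k g : Type*} [Field k] [CharZero k] [AddCommGroup g] [Module k g]
    [FiniteDimensional k g]
    (b : g → g → g) (t : g → g → g → g) (hg : IsLieYamaguti k b t)
    (ω : g → g → k) (E : g → g) (hpk : IsParaKahler k b t ω E)
    (hab : IsAbelianProduct b t E) (hperf : IsPerfectMap b t E)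
    (m : g → g → g) (tt : g → g → g → g)
    (hm : ∀ x y z, ω (m x y) z = -ω y (b x z))
    (ht : ∀ x y z w, ω (tt x y z) w = ω x (t w z y)) :
    (∀ x y, E (m x y) = m (E x) y) ∧
    (∀ x y z, E (tt x y z) = -tt (E x) y z + tt x (E y) z + tt x y (E z)) := by
  obtain ⟨hω, hE, hcomp⟩ := hpk
  have hadd₁ := hω.bilin.add₁
  have hadd₂ := hω.bilin.add₂
  have hneg₁ : ∀ u v, ω (-u) v = -ω u v := fun u v => by
    simpa using hω.bilin.smul₁ (-1) u v
  have hneg₂ : ∀ u v, ω u (-v) = -ω u v := fun u v => by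
    simpa using hω.bilin.smul₂ (-1) u v
  have hskew : ∀ u v, ω (E u) v = -ω u (E v) := fun u v => by
    simpa only [hE.prod.invol] using hcomp u (E v)
  have hext : ∀ u v, (∀ w, ω u w = ω v w) → u = v := fun u v h =>
    sub_eq_zero.mp <| hω.nondeg _ fun w => by
      rw [sub_eq_add_neg, hadd₁, hneg₁, h w, add_neg_cancel]
  refine ⟨fun x y => hext _ _ fun w => ?_, fun x y z => hext _ _ fun w => ?_⟩
  · rw [hskew, hm, hm, hab.1 x w, hneg₂]
  · have hsum : -t (E w) z y = E (t w z y) + t w z (E y) + t w (E z) y := by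
      rw [hperf.2, neg_eq_iff_add_eq_zero, ← hab.2 w z y]
      abel
    calc ω (E (tt x y z)) w = ω x (-t (E w) z y) := by rw [hskew, ht, hneg₂]
      _ = ω x (E (t w z y)) + ω x (t w z (E y)) + ω x (t w (E z) y) := by
        rw [hsum, hadd₂, hadd₂]
      _ = ω (-tt (E x) y z + tt x (E y) z + tt x y (E z)) w := by
        rw [hadd₁, hadd₁, hneg₁, ht, ht, ht, hskew, neg_neg]
end

section
/- Let (g,ω,E) be a finite-dimensional para-Kähler Lie-Yamaguti algebra over a field of characteristic 0 whose paracomplex structure E is abelian, let g₊ and g₋ be the ±1-eigenspaces of E, and let (*, {·,·,·}) be the pre-Lie-Yamaguti structure on g defined by ω. Then g₊ and g₋ are closed under * and under {·,·,·}: for all x,y,z in g₊ one has x*y ∈ g₊ and {x,y,z} ∈ g₊, and likewise for g₋. -/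
/-- The orthogonal of the `ε`-eigenspace of `E` (with `ε ^ 2 = 1`) is contained in that
eigenspace. -/
theorem mem_eigenspace_of_orthogonal {k g : Type*} [Field k] [AddCommGroup g] [Module k g]
    {b : g → g → g} {t : g → g → g → g} {ω : g → g → k} {E : g → g}
    (hpk : IsParaKahler k b t ω E) {ε : k} (hε : ε * ε = 1) {u : g}
    (hu : ∀ w, E w = ε • w → ω u w = 0) : E u = ε • u := by
  obtain ⟨hs, hE, hc⟩ := hpk
  have hlin := hE.prod.lin
  have hadj : ∀ v w, ω (E v) w = -ω v (E w) := fun v w => by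
    have h := hc v (E w)
    rwa [hE.prod.invol] at h
  -- For every `w`, the vector `w + ε • E w` lies in the `ε`-eigenspace; pairing `u` with it amounts
  -- to pairing `u - ε • E u` with `w`.
  have hzero : u + (-ε) • E u = 0 := by
    refine hs.nondeg _ fun w => ?_
    have h := hu (w + ε • E w) (by
      rw [hlin.map_add, hlin.map_smul, hE.prod.invol, smul_add, smul_smul, hε, one_smul, add_comm])
    rw [hs.bilin.add₂, hs.bilin.smul₂, smul_eq_mul] at h
    rw [hs.bilin.add₁, hs.bilin.smul₁, hadj, smul_eq_mul]
    linear_combination h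
  have h : ε • (u + (-ε) • E u) = 0 := by rw [hzero, smul_zero]
  rw [smul_add, smul_smul, mul_neg, hε, neg_smul, one_smul, ← sub_eq_add_neg, sub_eq_zero] at h
  exact h.symm

theorem bracket_eq_zero_of_abelian {k g : Type*} [Field k] [CharZero k] [AddCommGroup g]
    [Module k g] {b : g → g → g} {t : g → g → g → g} {E : g → g} (hg : IsLieYamaguti k b t)
    (hab : IsAbelianProduct b t E) {ε : k} (hε : ε * ε = 1) {x y : g}
    (hx : E x = ε • x) (hy : E y = ε • y) : b x y = 0 := by
  have hε0 : ε ≠ 0 := left_ne_zero_of_mul_eq_one hε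
  have h := hab.1 x y
  rw [hx, hy, hg.bilin.smul₁, hg.bilin.smul₂] at h
  have h2 : (2 * ε) • b x y = 0 := by
    rw [two_mul, add_smul]
    exact eq_neg_iff_add_eq_zero.mp h
  exact (smul_eq_zero.mp h2).resolve_left (mul_ne_zero two_ne_zero hε0)

theorem ternary_eq_zero_of_abelian {k g : Type*} [Field k] [CharZero k] [AddCommGroup g]
    [Module k g] {b : g → g → g} {t : g → g → g → g} {E : g → g} (hg : IsLieYamaguti k b t)
    (hab : IsAbelianProduct b t E) {ε : k} (hε : ε * ε = 1) {x y z : g}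
    (hx : E x = ε • x) (hy : E y = ε • y) (hz : E z = ε • z) : t x y z = 0 := by
  have hε0 : ε ≠ 0 := left_ne_zero_of_mul_eq_one hε
  have h := hab.2 x y z
  simp only [hx, hy, hz, hg.trilin.smul₁, hg.trilin.smul₂, hg.trilin.smul₃, smul_smul, hε,
    mul_one] at h
  have h4 : (4 * ε) • t x y z = 0 := by
    rw [show 4 * ε = ε + ε + ε + ε * (ε * ε) by rw [hε]; ring]
    simp only [add_smul, hε, mul_one]
    exact h
  exact (smul_eq_zero.mp h4).resolve_left (mul_ne_zero (by norm_num) hε0)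

/-- In a para-Kähler Lie-Yamaguti algebra with abelian paracomplex structure `E`,
the eigenspaces `g₊` and `g₋` of `E` are closed under the pre-Lie-Yamaguti products defined by
`ω`. -/
theorem statement14 {k g : Type*} [Field k] [CharZero k] [AddCommGroup g] [Module k g]
    [FiniteDimensional k g]
    (b : g → g → g) (t : g → g → g → g) (hg : IsLieYamaguti k b t)
    (ω : g → g → k) (E : g → g) (hpk : IsParaKahler k b t ω E)
    (hab : IsAbelianProduct b t E)
    (m : g → g → g) (tt : g → g → g → g)
    (hm : ∀ x y z, ω (m x y) z = -ω y (b x z))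
    (ht : ∀ x y z w, ω (tt x y z) w = ω x (t w z y)) :
    (∀ x y z, E x = x → E y = y → E z = z →
      E (m x y) = m x y ∧ E (tt x y z) = tt x y z) ∧
    (∀ x y z, E x = -x → E y = -y → E z = -z →
      E (m x y) = -m x y ∧ E (tt x y z) = -tt x y z) := by
  have hω0 : ∀ x, ω x 0 = 0 := fun x => by
    simpa using hpk.1.bilin.smul₂ 0 x 0
  have key : ∀ ε : k, ε * ε = 1 → ∀ x y z, E x = ε • x → E y = ε • y → E z = ε • z →
      E (m x y) = ε • m x y ∧ E (tt x y z) = ε • tt x y z := by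
    intro ε hε x y z hx hy hz
    refine ⟨mem_eigenspace_of_orthogonal hpk hε fun w hw => ?_,
      mem_eigenspace_of_orthogonal hpk hε fun w hw => ?_⟩
    · rw [hm, bracket_eq_zero_of_abelian hg hab hε hx hw, hω0, neg_zero]
    · rw [ht, ternary_eq_zero_of_abelian hg hab hε hw hz hy, hω0]
  exact ⟨by simpa using key 1 (by ring), by simpa using key (-1) (by ring)⟩
end

section
/- Let (g,ω,E) be a finite-dimensional para-Kähler Lie-Yamaguti algebra over a field of characteristic 0, and define S(x,y) := ω(x,Ey). Then S is a symmetric nondegenerate bilinear form, so (g,S) is a pseudo-Riemannian Lie-Yamaguti algebra. Moreover, if E is perfect, the trilinear Levi-Civita product Δ associated to S satisfies E(Δ_{x,y} z) = Δ_{Ex,Ey}(Ez) for all x,y,z in g. -/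
/-- For a para-Kähler Lie-Yamaguti algebra `(g, ω, E)`, the form
`S(x,y) = ω(x, Ey)` is a pseudo-Riemannian metric; moreover, if `E` is perfect, the trilinear
Levi-Civita product `Δ` associated to `S` satisfies `E(Δ_{x,y} z) = Δ_{Ex,Ey}(Ez)`. -/
theorem statement15 {k g : Type*} [Field k] [CharZero k] [AddCommGroup g] [Module k g]
    [FiniteDimensional k g]
    (b : g → g → g) (t : g → g → g → g) (hg : IsLieYamaguti k b t)
    (ω : g → g → k) (E : g → g) (hpk : IsParaKahler k b t ω E) :
    IsBilinMap k (fun x y => ω x (E y)) ∧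
    (∀ x y, ω x (E y) = ω y (E x)) ∧
    (∀ x, (∀ y, ω x (E y) = 0) → x = 0) ∧
    (IsPerfectMap b t E →
      ∀ Δ : g → g → g → g,
        (∀ x y z w, (3 : k) * ω (Δ x y z) (E w)
          = ω (t x y w) (E z) + ω (t x y z) (E w) + ω (t w z x) (E y)
            + (2 : k) * ω (t w z y) (E x)) →
        ∀ x y z, E (Δ x y z) = Δ (E x) (E y) (E z)) := by
  obtain ⟨hω, hpc, hE⟩ := hpk
  have inv := hpc.prod.invol
  have lin := hpc.prod.lin
  have adj : ∀ x y, ω (E x) y = -ω x (E y) := fun x y => by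
    rw [← hE x (E y), inv]
  refine ⟨⟨fun x y z => hω.bilin.add₁ _ _ _, fun c x z => hω.bilin.smul₁ _ _ _,
    fun x y z => ?_, fun c x y => ?_⟩, fun x y => ?_, fun x hx => ?_, ?_⟩
  · simp only [lin.map_add, hω.bilin.add₂]
  · simp only [lin.map_smul, hω.bilin.smul₂]
  · rw [hω.skew x (E y), adj, neg_neg]
  · exact hω.nondeg x fun y => by simpa only [inv] using hx (E y)
  · rintro ⟨-, ht⟩ Δ hΔ x y z
    have h3 : (3 : k) ≠ 0 := by norm_num
    have neg_left : ∀ a c, ω (-a) c = -ω a c := fun a c => by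
      simpa using hω.bilin.smul₁ (-1) a c
    rw [← sub_eq_zero]
    refine hω.nondeg _ fun w => ?_
    rw [sub_eq_add_neg, hω.bilin.add₁, neg_left]
    -- `ω (E Δ) w = -S(Δ, w)` and `ω Γ w = S(Γ, E w)` for `Δ = Δ x y z`, `Γ = Δ (E x) (E y) (E z)`,
    -- so the defining formula is used at `w` and at `E w` respectively.
    have h1 := hΔ x y z w
    have h2 := hΔ (E x) (E y) (E z) (E w)
    simp only [← ht, inv, adj] at h1 h2
    apply mul_left_cancel₀ h3
    rw [adj]
    linear_combination -h1 - h2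
end

section
/- Let (g,ω,E) be a para-Kähler Lie-Yamaguti algebra where g is a finite-dimensional Lie-Yamaguti algebra over the complex numbers and ω is complex-bilinear. Then (g_ℝ, ω_ℝ, J) is a real pseudo-Kähler Lie-Yamaguti algebra, where g_ℝ is the underlying real Lie-Yamaguti algebra of g, J := iE, and ω_ℝ := Re(ω) is the real part of ω. -/
theorem IsBilinMap.restrictReal {M N P : Type*} [AddCommGroup M] [Module ℂ M] [AddCommGroup N]
    [Module ℂ N] [AddCommGroup P] [Module ℂ P] {f : M → N → P} (h : IsBilinMap ℂ f) :
    IsBilinMap ℝ f where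
  add₁ := h.add₁
  smul₁ c x z := by simpa only [Complex.coe_smul] using h.smul₁ (c : ℂ) x z
  add₂ := h.add₂
  smul₂ c x y := by simpa only [Complex.coe_smul] using h.smul₂ (c : ℂ) x y

theorem IsTrilinMap.restrictReal {M N P Q : Type*} [AddCommGroup M] [Module ℂ M]
    [AddCommGroup N] [Module ℂ N] [AddCommGroup P] [Module ℂ P] [AddCommGroup Q] [Module ℂ Q]
    {f : M → N → P → Q} (h : IsTrilinMap ℂ f) : IsTrilinMap ℝ f where
  add₁ := h.add₁
  smul₁ c x z w := by simpa only [Complex.coe_smul] using h.smul₁ (c : ℂ) x z w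
  add₂ := h.add₂
  smul₂ c x y w := by simpa only [Complex.coe_smul] using h.smul₂ (c : ℂ) x y w
  add₃ := h.add₃
  smul₃ c x y z := by simpa only [Complex.coe_smul] using h.smul₃ (c : ℂ) x y z

theorem IsLieYamaguti.restrictReal {g : Type*} [AddCommGroup g] [Module ℂ g]
    {b : g → g → g} {t : g → g → g → g} (h : IsLieYamaguti ℂ b t) : IsLieYamaguti ℝ b t :=
  { h with
    bilin := h.bilin.restrictReal
    trilin := h.trilin.restrictReal }

theorem IsSymplectic.re {g : Type*} [AddCommGroup g] [Module ℂ g]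
    {b : g → g → g} {t : g → g → g → g} {ω : g → g → ℂ} (h : IsSymplectic ℂ b t ω) :
    IsSymplectic ℝ b t (fun x y => (ω x y).re) where
  bilin :=
    { add₁ x y z := by simp [h.bilin.add₁]
      smul₁ c x z := by simp [h.bilin.restrictReal.smul₁]
      add₂ x y z := by simp [h.bilin.add₂]
      smul₂ c x y := by simp [h.bilin.restrictReal.smul₂] }
  skew x y := by simpa using congrArg Complex.re (h.skew x y)
  nondeg x hx := h.nondeg x fun y => by
    -- Testing against `i y` recovers the imaginary part of `ω x y`.
    have hI := hx (Complex.I • y)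
    simp only [h.bilin.smul₂, smul_eq_mul, Complex.I_mul_re, neg_eq_zero] at hI
    exact Complex.ext (hx y) hI
  c1 x y z := by simpa using congrArg Complex.re (h.c1 x y z)
  c2 x y z w := by simpa using congrArg Complex.re (h.c2 x y z w)

/-- Multiplication by `i` turns a complex product structure into a complex structure on the
underlying real algebra. -/
theorem IsProductStructure.isComplexStructure_I_smul {g : Type*} [AddCommGroup g] [Module ℂ g]
    {b : g → g → g} {t : g → g → g → g} {E : g → g} (hb : IsBilinMap ℂ b)
    (ht : IsTrilinMap ℂ t) (h : IsProductStructure ℂ b t E) :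
    IsComplexStructure ℝ b t (fun x => (Complex.I : ℂ) • E x) where
  lin :=
    { map_add x y := by simp only [h.lin.map_add, smul_add]
      map_smul c x := by
        have hc := h.lin.map_smul (c : ℂ) x
        rw [Complex.coe_smul, Complex.coe_smul] at hc
        rw [hc, smul_comm] }
  invol x := by simp [h.lin.map_smul, h.invol, smul_smul]
  integ_b x y := by
    simp only [hb.smul₁, hb.smul₂, h.lin.map_smul, smul_smul, Complex.I_mul_I, h.integ_b]
    module
  integ_t x y z := by
    simp only [ht.smul₁, ht.smul₂, ht.smul₃, h.lin.map_smul, smul_smul, Complex.I_mul_I,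
      mul_neg, mul_one, h.integ_t]
    module

/-- A complex para-Kähler Lie-Yamaguti algebra `(g, ω, E)` yields a real
pseudo-Kähler Lie-Yamaguti algebra `(g_ℝ, Re ω, iE)`. -/
theorem statement17 {g : Type*} [AddCommGroup g] [Module ℂ g]
    (b : g → g → g) (t : g → g → g → g) (hg : IsLieYamaguti ℂ b t)
    (ω : g → g → ℂ) (E : g → g) (hpk : IsParaKahler ℂ b t ω E) :
    IsLieYamaguti ℝ b t ∧
    IsPseudoKahler ℝ b t (fun x y => (ω x y).re) (fun x => (Complex.I : ℂ) • E x) := by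
  obtain ⟨hω, hE, hcompat⟩ := hpk
  refine ⟨hg.restrictReal, hω.re, hE.prod.isComplexStructure_I_smul hg.bilin hg.trilin,
    fun x y => ?_⟩
  simp [hω.bilin.smul₁, hω.bilin.smul₂, hcompat]
end
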